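/- arXiv:2110.02796 — 2 statements merged into one kernel-verified Lean document; each statement's English description precedes it below -/
import Mathlib

section
/- Assume d ≥ K−1. Every feasible point of the minimum-norm separation problem, i.e. every (W,H) with s_{k,i,j}(W,H) ≥ 1 for all k ∈ [K], i ∈ [n], j ≠ k, satisfies ‖W‖_F² + ‖H‖_F² ≥ 2(K−1)√n, and this lower bound is attained by some feasible point. Moreover, every global minimizer (a feasible point whose value of ‖W‖_F² + ‖H‖_F² is minimal among all feasible points) satisfies the neural collapse conditions with ‖W‖_F = ‖H‖_F. -/
open scoped BigOperators RealInnerProductSpace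
open Finset

noncomputable def sWH {K n d : ℕ} (W : Fin K → EuclideanSpace ℝ (Fin d))
    (H : Fin K → Fin n → EuclideanSpace ℝ (Fin d)) (k : Fin K) (i : Fin n) (j : Fin K) : ℝ :=
  ⟪W k - W j, H k i⟫

noncomputable def WF2 {K d : ℕ} (W : Fin K → EuclideanSpace ℝ (Fin d)) : ℝ := ∑ k, ‖W k‖ ^ 2

noncomputable def HF2 {K n d : ℕ} (H : Fin K → Fin n → EuclideanSpace ℝ (Fin d)) : ℝ :=
  ∑ k, ∑ i, ‖H k i‖ ^ 2

/-- The neural collapse conditions (NC-a)–(NC-d). -/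
def NeuralCollapse {K n d : ℕ} (W : Fin K → EuclideanSpace ℝ (Fin d))
    (H : Fin K → Fin n → EuclideanSpace ℝ (Fin d)) : Prop :=
  -- (NC-a) variability collapse
  (∀ k i i', H k i = H k i') ∧
  -- (NC-b)
  (∑ k, W k) = 0 ∧ (∀ k k', ‖W k‖ = ‖W k'‖) ∧
  (∀ k k' i i', ‖H k i‖ = ‖H k' i'‖) ∧ (∀ k i, H k i ≠ 0) ∧
  -- (NC-c)
  (∀ k j, k ≠ j → ∀ i i', ⟪H k i, H j i'⟫ = -(‖H k i‖ * ‖H j i'‖) / ((K : ℝ) - 1)) ∧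
  -- (NC-d)
  (∃ C : ℝ, 0 < C ∧ ∀ k i, W k = C • H k i)

/-- Feasibility for the minimum-norm separation problem. -/
def Feasible {K n d : ℕ} (W : Fin K → EuclideanSpace ℝ (Fin d))
    (H : Fin K → Fin n → EuclideanSpace ℝ (Fin d)) : Prop :=
  ∀ k i j, j ≠ k → 1 ≤ sWH W H k i j

/-!
Write `v k = W k - W̄` for the centred classifier, `K` for the number of classes, `n` for the number
of samples per class and `r = √n`. Completing the square gives

`‖W‖² + ‖H‖² = 2 (K - 1) r + K⁻¹ ‖∑ W k‖² + ∑ ‖r⁻¹ v k - H k i‖² + 2 r⁻¹ ∑ (⟪v k, H k i⟫ - (1 - K⁻¹))`.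

Averaging the margin constraints over `j` shows that the last summands are nonnegative on the
feasible set, which proves the bound. Equality forces `∑ W k = 0`, `H k i = r⁻¹ W k` and unit margins,
and these say exactly that `W` has the Gram matrix `r (I - K⁻¹ J)` of a regular simplex. Such a
family exists in dimension `K - 1`: centre the standard basis of `ℝ^K`.
-/

section SubMean

variable {ι E : Type*} [Fintype ι] [NormedAddCommGroup E] [InnerProductSpace ℝ E]

/-- The family `u` translated so that its mean is zero. This is the part of a classifier that the
pairwise differences `u k - u j`, hence the margins, depend on. -/
noncomputable def subMean (u : ι → E) (k : ι) : E :=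
  u k - (Fintype.card ι : ℝ)⁻¹ • ∑ j, u j

theorem subMean_eq_self_of_sum_eq_zero {u : ι → E} (hu : ∑ j, u j = 0) : subMean u = u := by
  funext k
  simp [subMean, hu]

theorem sum_subMean [Nonempty ι] (u : ι → E) : ∑ k, subMean u k = 0 := by
  simp [subMean, ← Nat.cast_smul_eq_nsmul ℝ, smul_smul]

theorem sum_inner_sub_eq_card_mul_inner_subMean [Nonempty ι] (u : ι → E) (k : ι) (x : E) :
    ∑ j, ⟪u k - u j, x⟫ = Fintype.card ι * ⟪subMean u k, x⟫ := by
  have hsum : ∑ j, (u k - u j) = (Fintype.card ι : ℝ) • subMean u k := by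
    simp [subMean, smul_sub, smul_smul, ← Nat.cast_smul_eq_nsmul ℝ]
  rw [← sum_inner, hsum, real_inner_smul_left]

theorem sum_norm_sq_eq_sum_norm_sq_subMean_add [Nonempty ι] (u : ι → E) :
    ∑ k, ‖u k‖ ^ 2 =
      ∑ k, ‖subMean u k‖ ^ 2 + (Fintype.card ι : ℝ)⁻¹ * ‖∑ k, u k‖ ^ 2 := by
  set m := (Fintype.card ι : ℝ)⁻¹ • ∑ k, u k with hm
  have hu (k : ι) : ‖u k‖ ^ 2 = ‖subMean u k‖ ^ 2 + 2 * ⟪subMean u k, m⟫ + ‖m‖ ^ 2 := by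
    rw [← norm_add_sq_real, subMean, ← hm, sub_add_cancel]
  have hm_sq : Fintype.card ι * ‖m‖ ^ 2 = (Fintype.card ι : ℝ)⁻¹ * ‖∑ k, u k‖ ^ 2 := by
    rw [hm, norm_smul, mul_pow, Real.norm_eq_abs, sq_abs]
    field_simp
  simp only [hu, sum_add_distrib, ← mul_sum, ← sum_inner, sum_subMean, inner_zero_left, sum_const,
    card_univ, nsmul_eq_mul, hm_sq]
  ring

end SubMean

theorem sum_eq_card_sub_one_mul_add_sum_erase {ι R : Type*} [Fintype ι] [DecidableEq ι] [Ring R]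
    {f : ι → R} {k : ι} (hk : f k = 0) (a : R) :
    ∑ j, f j = (Fintype.card ι - 1) * a + ∑ j ∈ univ.erase k, (f j - a) := by
  rw [sum_erase_eq_sub (mem_univ k)]
  simp only [sum_sub_distrib, sum_const, card_univ, nsmul_eq_mul, hk]
  noncomm_ring

theorem eq_zero_of_sum_sum_eq_zero {ι κ M : Type*} [Fintype ι] [Fintype κ] [AddCommMonoid M]
    [PartialOrder M] [IsOrderedAddMonoid M] {f : ι → κ → M} (hf : ∀ k i, 0 ≤ f k i)
    (h : ∑ k, ∑ i, f k i = 0) (k : ι) (i : κ) : f k i = 0 := by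
  rw [Fintype.sum_eq_zero_iff_of_nonneg fun k => sum_nonneg fun i _ => hf k i] at h
  exact congrFun ((Fintype.sum_eq_zero_iff_of_nonneg (hf k)).1 (congrFun h k)) i

theorem exists_linearIsometry_of_finrank_le_rank {𝕜 E F : Type*} [RCLike 𝕜]
    [NormedAddCommGroup E] [InnerProductSpace 𝕜 E] [NormedAddCommGroup F] [InnerProductSpace 𝕜 F]
    [FiniteDimensional 𝕜 E] (h : (Module.finrank 𝕜 E : Cardinal) ≤ Module.rank 𝕜 F) :
    Nonempty (E →ₗᵢ[𝕜] F) := by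
  obtain ⟨s, hcard, hs⟩ := exists_finset_linearIndependent_of_le_rank h
  let S := Submodule.span 𝕜 (s : Set F)
  have hS : Module.finrank 𝕜 E = Module.finrank 𝕜 S := by
    rw [← hcard, finrank_span_finset_eq_card hs]
  exact ⟨S.subtypeₗᵢ.comp
    ((stdOrthonormalBasis 𝕜 E).equiv (stdOrthonormalBasis 𝕜 S) (finCongr hS)).toLinearIsometry⟩

section SimplexETF

variable {ι E F : Type*} [Fintype ι] [NormedAddCommGroup E] [InnerProductSpace ℝ E]
  [NormedAddCommGroup F] [InnerProductSpace ℝ F] {a : ℝ} {u : ι → E}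

/-- A simplex equiangular tight frame of scale `a`: the Gram matrix of `u` is `a • (I - K⁻¹ • J)`,
where `K` is the number of vectors and `J` the all-ones matrix. -/
structure IsSimplexETF (a : ℝ) (u : ι → E) : Prop where
  norm_sq (k : ι) : ‖u k‖ ^ 2 = a * (1 - (Fintype.card ι : ℝ)⁻¹)
  inner_eq (j k : ι) : j ≠ k → ⟪u j, u k⟫ = -(a * (Fintype.card ι : ℝ)⁻¹)

namespace IsSimplexETF

theorem norm_eq (hu : IsSimplexETF a u) (j k : ι) : ‖u j‖ = ‖u k‖ := by
  rw [← sq_eq_sq₀ (norm_nonneg _) (norm_nonneg _), hu.norm_sq, hu.norm_sq]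

theorem ne_zero [Nontrivial ι] (hu : IsSimplexETF a u) (ha : 0 < a) (k : ι) : u k ≠ 0 := by
  have hcard : (1 : ℝ) < Fintype.card ι := by exact_mod_cast Fintype.one_lt_card (α := ι)
  rw [← norm_ne_zero_iff, ← sq_pos_iff, hu.norm_sq]
  exact mul_pos ha (sub_pos.2 (inv_lt_one_of_one_lt₀ hcard))

theorem inner_eq_neg_norm_mul_norm_div (hu : IsSimplexETF a u) {j k : ι} (hjk : j ≠ k) :
    ⟪u j, u k⟫ = -(‖u j‖ * ‖u k‖) / (Fintype.card ι - 1) := by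
  have : Nontrivial ι := ⟨j, k, hjk⟩
  have hcard : (1 : ℝ) < Fintype.card ι := by exact_mod_cast Fintype.one_lt_card (α := ι)
  have hcard_sub : (Fintype.card ι : ℝ) - 1 ≠ 0 := (sub_pos.2 hcard).ne'
  rw [hu.inner_eq j k hjk, hu.norm_eq j k, ← sq, hu.norm_sq]
  field_simp

theorem inner_sub_self (hu : IsSimplexETF a u) {j k : ι} (hjk : j ≠ k) :
    ⟪u k - u j, u k⟫ = a := by
  rw [inner_sub_left, real_inner_self_eq_norm_sq, hu.norm_sq, hu.inner_eq j k hjk]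
  ring

theorem sum_eq_zero [Nonempty ι] (hu : IsSimplexETF a u) : ∑ k, u k = 0 := by
  classical
  have horth (k : ι) : ⟪∑ j, u j, u k⟫ = 0 := by
    rw [sum_inner, ← add_sum_erase _ _ (mem_univ k), real_inner_self_eq_norm_sq, hu.norm_sq,
      sum_congr rfl fun j hj => hu.inner_eq j k (ne_of_mem_erase hj), sum_const, nsmul_eq_mul,
      cast_card_erase_of_mem (mem_univ k), card_univ]
    field_simp
    ring
  rw [← inner_self_eq_zero (𝕜 := ℝ), inner_sum]
  exact Finset.sum_eq_zero fun k _ => horth k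

theorem of_sum_eq_zero [Nonempty ι] (hsum : ∑ k, u k = 0)
    (hinner : ∀ j k, j ≠ k → ⟪u k - u j, u k⟫ = a) : IsSimplexETF a u := by
  classical
  have hnorm (k : ι) : ‖u k‖ ^ 2 = a * (1 - (Fintype.card ι : ℝ)⁻¹) := by
    have hcard : Fintype.card ι * ‖u k‖ ^ 2 = (Fintype.card ι - 1) * a := by
      rw [← real_inner_self_eq_norm_sq, ← congrFun (subMean_eq_self_of_sum_eq_zero hsum) k,
        ← sum_inner_sub_eq_card_mul_inner_subMean,
        sum_eq_card_sub_one_mul_add_sum_erase (k := k) (by simp) a, add_eq_left]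
      refine Finset.sum_eq_zero fun j hj => ?_
      rw [subMean_eq_self_of_sum_eq_zero hsum, hinner j k (ne_of_mem_erase hj), sub_self]
    field_simp
    linarith
  refine ⟨hnorm, fun j k hjk => ?_⟩
  have h := hinner j k hjk
  rw [inner_sub_left, real_inner_self_eq_norm_sq, hnorm] at h
  linarith

theorem smul (hu : IsSimplexETF a u) (c : ℝ) : IsSimplexETF (c ^ 2 * a) (c • u) where
  norm_sq k := by
    rw [Pi.smul_apply, norm_smul, mul_pow, hu.norm_sq, Real.norm_eq_abs, sq_abs, mul_assoc]
  inner_eq j k hjk := by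
    rw [Pi.smul_apply, Pi.smul_apply, real_inner_smul_left, real_inner_smul_right,
      hu.inner_eq j k hjk]
    ring

theorem map (hu : IsSimplexETF a u) (L : E →ₗᵢ[ℝ] F) : IsSimplexETF a (L ∘ u) where
  norm_sq k := by simp [hu.norm_sq]
  inner_eq j k hjk := by simp [hu.inner_eq j k hjk]

end IsSimplexETF

theorem inner_sum_of_orthonormal {u : ι → E} (hu : Orthonormal ℝ u) (k : ι) :
    ⟪u k, ∑ j, u j⟫ = 1 := by
  simpa using hu.inner_right_fintype (fun _ => 1) k

theorem isSimplexETF_subMean_of_orthonormal [Nonempty ι] {u : ι → E} (hu : Orthonormal ℝ u) :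
    IsSimplexETF 1 (subMean u) := by
  refine .of_sum_eq_zero (sum_subMean u) fun j k hjk => ?_
  simp only [subMean, sub_sub_sub_cancel_right, inner_sub_left, inner_sub_right,
    real_inner_smul_right, inner_sum_of_orthonormal hu, real_inner_self_eq_norm_sq, hu.1 k,
    hu.2 hjk]
  ring

theorem inner_sum_subMean_of_orthonormal [Nonempty ι] {u : ι → E} (hu : Orthonormal ℝ u) (k : ι) :
    ⟪∑ j, u j, subMean u k⟫ = 0 := by
  have hsum : ⟪∑ j, u j, ∑ j, u j⟫ = Fintype.card ι := by
    simp only [sum_inner, inner_sum_of_orthonormal hu, sum_const, card_univ, nsmul_eq_mul, mul_one]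
  rw [subMean, inner_sub_right, real_inner_smul_right, hsum, real_inner_comm,
    inner_sum_of_orthonormal hu, inv_mul_cancel₀ (by positivity), sub_self]

theorem exists_isSimplexETF [Nonempty ι] (ha : 0 ≤ a)
    (hE : (Fintype.card ι : Cardinal) ≤ Module.rank ℝ E + 1) : ∃ u : ι → E, IsSimplexETF a u := by
  classical
  obtain ⟨m, hm⟩ := Nat.exists_eq_succ_of_ne_zero (Fintype.card_ne_zero (α := ι))
  let e := EuclideanSpace.basisFun ι ℝ
  let o := ∑ j, e j
  have ho : o ≠ 0 := fun h => by
    have := inner_sum_of_orthonormal e.orthonormal (Classical.arbitrary ι)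
    simp [o, h] at this
  have : Fact (Module.finrank ℝ (EuclideanSpace ℝ ι) = m + 1) := ⟨by simp [hm]⟩
  have hrank : (Module.finrank ℝ (ℝ ∙ o)ᗮ : Cardinal) ≤ Module.rank ℝ E := by
    rw [Submodule.finrank_orthogonal_span_singleton (n := m) ho]
    simpa [hm] using hE
  obtain ⟨L⟩ := exists_linearIsometry_of_finrank_le_rank hrank
  let u (k : ι) : (ℝ ∙ o)ᗮ := ⟨subMean e k, Submodule.mem_orthogonal_singleton_iff_inner_right.2
    (inner_sum_subMean_of_orthonormal e.orthonormal k)⟩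
  have hu : IsSimplexETF 1 u :=
    let h := isSimplexETF_subMean_of_orthonormal e.orthonormal
    ⟨h.norm_sq, h.inner_eq⟩
  exact ⟨_, by simpa [Real.sq_sqrt ha] using (hu.map L).smul √a⟩

end SimplexETF

section Separation

variable {ι κ E : Type*} [Fintype ι] [NormedAddCommGroup E] [InnerProductSpace ℝ E]
  {W : ι → E} {H : ι → κ → E}

/-- Feasibility for the minimum-norm separation problem, with arbitrary finite sets of classes `ι`
and of samples `κ` and features in any real inner product space. -/
def IsSeparating (W : ι → E) (H : ι → κ → E) : Prop :=
  ∀ k i j, j ≠ k → 1 ≤ ⟪W k - W j, H k i⟫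

namespace IsSeparating

theorem one_sub_inv_card_le_inner_subMean (h : IsSeparating W H) (k : ι) (i : κ) :
    1 - (Fintype.card ι : ℝ)⁻¹ ≤ ⟪subMean W k, H k i⟫ := by
  classical
  have : Nonempty ι := ⟨k⟩
  have hsum := sum_inner_sub_eq_card_mul_inner_subMean W k (H k i)
  rw [sum_eq_card_sub_one_mul_add_sum_erase (k := k) (by simp) 1] at hsum
  have hexcess : 0 ≤ ∑ j ∈ univ.erase k, (⟪W k - W j, H k i⟫ - 1) :=
    sum_nonneg fun j hj => sub_nonneg.2 (h k i j (ne_of_mem_erase hj))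
  field_simp
  linarith

theorem inner_eq_one_of_inner_subMean_eq (h : IsSeparating W H) {k : ι} {i : κ}
    (heq : ⟪subMean W k, H k i⟫ = 1 - (Fintype.card ι : ℝ)⁻¹) {j : ι} (hjk : j ≠ k) :
    ⟪W k - W j, H k i⟫ = 1 := by
  classical
  have : Nonempty ι := ⟨k⟩
  have hsum := sum_inner_sub_eq_card_mul_inner_subMean W k (H k i)
  rw [sum_eq_card_sub_one_mul_add_sum_erase (k := k) (by simp) 1, heq, mul_sub, mul_one,
    mul_one, mul_inv_cancel₀ (by positivity), add_eq_left, sum_eq_zero_iff_of_nonneg fun j hj =>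
      sub_nonneg.2 (h k i j (ne_of_mem_erase hj))] at hsum
  exact sub_eq_zero.1 (hsum j (mem_erase.2 ⟨hjk, mem_univ j⟩))

end IsSeparating

variable [Fintype κ]

/-- The objective `‖W‖_F² + ‖H‖_F²` of the minimum-norm separation problem. -/
noncomputable def separationObjective (W : ι → E) (H : ι → κ → E) : ℝ :=
  ∑ k, ‖W k‖ ^ 2 + ∑ k, ∑ i, ‖H k i‖ ^ 2

/-- The optimal configurations of the separation problem: `W` is a simplex equiangular tight frame
of scale `√n`, where `n` is the number of samples per class, and each feature is the `√n`-th part of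
the classifier of its class. -/
structure IsSimplexConfiguration (W : ι → E) (H : ι → κ → E) : Prop where
  isSimplexETF : IsSimplexETF √(Fintype.card κ) W
  feature_eq (k : ι) (i : κ) : H k i = (√(Fintype.card κ))⁻¹ • W k

theorem sum_sum_norm_sq_inv_sqrt_card_smul_sub [Nonempty κ] (v : ι → E) (H : ι → κ → E) :
    ∑ k, ∑ i, ‖(√(Fintype.card κ))⁻¹ • v k - H k i‖ ^ 2 =
      ∑ k, ‖v k‖ ^ 2 - 2 * (√(Fintype.card κ))⁻¹ * ∑ k, ∑ i, ⟪v k, H k i⟫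
        + ∑ k, ∑ i, ‖H k i‖ ^ 2 := by
  have hcard : (Fintype.card κ : ℝ) * (√(Fintype.card κ))⁻¹ ^ 2 = 1 := by
    rw [inv_pow, Real.sq_sqrt (Nat.cast_nonneg _), mul_inv_cancel₀ (by positivity)]
  set r := √(Fintype.card κ : ℝ)
  have hexpand (k : ι) (i : κ) : ‖r⁻¹ • v k - H k i‖ ^ 2 =
      r⁻¹ ^ 2 * ‖v k‖ ^ 2 - 2 * r⁻¹ * ⟪v k, H k i⟫ + ‖H k i‖ ^ 2 := by
    rw [norm_sub_sq_real, norm_smul, mul_pow, Real.norm_eq_abs, sq_abs, real_inner_smul_left,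
      mul_assoc]
  simp only [hexpand, sum_add_distrib, sum_sub_distrib, ← mul_sum, sum_const, card_univ,
    nsmul_eq_mul]
  linear_combination (∑ k, ‖v k‖ ^ 2) * hcard

theorem separationObjective_eq [Nonempty ι] [Nonempty κ] (W : ι → E) (H : ι → κ → E) :
    separationObjective W H = 2 * (Fintype.card ι - 1) * √(Fintype.card κ)
      + (Fintype.card ι : ℝ)⁻¹ * ‖∑ k, W k‖ ^ 2
      + ∑ k, ∑ i, ‖(√(Fintype.card κ))⁻¹ • subMean W k - H k i‖ ^ 2
      + 2 * (√(Fintype.card κ))⁻¹ *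
        ∑ k, ∑ i, (⟪subMean W k, H k i⟫ - (1 - (Fintype.card ι : ℝ)⁻¹)) := by
  have hr : 0 < √(Fintype.card κ : ℝ) := by positivity
  have hcard : (Fintype.card κ : ℝ) = √(Fintype.card κ) ^ 2 :=
    (Real.sq_sqrt (Nat.cast_nonneg _)).symm
  rw [separationObjective, sum_norm_sq_eq_sum_norm_sq_subMean_add,
    sum_sum_norm_sq_inv_sqrt_card_smul_sub]
  simp only [sum_sub_distrib, sum_const, card_univ, nsmul_eq_mul]
  set r := √(Fintype.card κ : ℝ)
  rw [hcard]
  field_simp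
  ring

namespace IsSeparating

theorem sum_excess_nonneg (h : IsSeparating W H) :
    0 ≤ ∑ k, ∑ i, (⟪subMean W k, H k i⟫ - (1 - (Fintype.card ι : ℝ)⁻¹)) :=
  sum_nonneg fun k _ => sum_nonneg fun i _ =>
    sub_nonneg.2 (h.one_sub_inv_card_le_inner_subMean k i)

theorem le_separationObjective [Nonempty ι] [Nonempty κ] (h : IsSeparating W H) :
    2 * (Fintype.card ι - 1) * √(Fintype.card κ) ≤ separationObjective W H := by
  have hexcess := h.sum_excess_nonneg
  rw [separationObjective_eq, add_assoc, add_assoc]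
  exact le_add_of_nonneg_right (by positivity)

theorem isSimplexConfiguration [Nonempty ι] [Nonempty κ] (h : IsSeparating W H)
    (hopt : separationObjective W H ≤ 2 * (Fintype.card ι - 1) * √(Fintype.card κ)) :
    IsSimplexConfiguration W H := by
  have hr : 0 < √(Fintype.card κ : ℝ) := by positivity
  have hmean_nonneg : 0 ≤ (Fintype.card ι : ℝ)⁻¹ * ‖∑ k, W k‖ ^ 2 := by positivity
  have hdist_nonneg :
      0 ≤ ∑ k, ∑ i, ‖(√(Fintype.card κ))⁻¹ • subMean W k - H k i‖ ^ 2 := by positivity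
  have hexcess_nonneg :=
    mul_nonneg (by positivity : 0 ≤ 2 * (√(Fintype.card κ))⁻¹) h.sum_excess_nonneg
  rw [separationObjective_eq] at hopt
  have hsum : ∑ k, W k = 0 := by
    have : (Fintype.card ι : ℝ)⁻¹ * ‖∑ k, W k‖ ^ 2 = 0 := by linarith
    simpa using this
  have hfeature (k : ι) (i : κ) : H k i = (√(Fintype.card κ))⁻¹ • W k := by
    have hdist : ∑ k, ∑ i, ‖(√(Fintype.card κ))⁻¹ • subMean W k - H k i‖ ^ 2 = 0 := by linarith
    have hki := eq_zero_of_sum_sum_eq_zero (fun _ _ => sq_nonneg _) hdist k i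
    rw [sq_eq_zero_iff, norm_eq_zero, sub_eq_zero, subMean_eq_self_of_sum_eq_zero hsum] at hki
    exact hki.symm
  have hmargin (k : ι) (i : κ) : ⟪subMean W k, H k i⟫ = 1 - (Fintype.card ι : ℝ)⁻¹ := by
    have hexcess : ∑ k, ∑ i, (⟪subMean W k, H k i⟫ - (1 - (Fintype.card ι : ℝ)⁻¹)) = 0 :=
      (mul_eq_zero.1 (by linarith)).resolve_left (by positivity : 2 * (√(Fintype.card κ))⁻¹ ≠ 0)
    exact sub_eq_zero.1 (eq_zero_of_sum_sum_eq_zero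
      (fun k i => sub_nonneg.2 (h.one_sub_inv_card_le_inner_subMean k i)) hexcess k i)
  refine ⟨.of_sum_eq_zero hsum fun j k hjk => ?_, hfeature⟩
  have hone := h.inner_eq_one_of_inner_subMean_eq (hmargin k (Classical.arbitrary κ)) hjk
  rw [hfeature, real_inner_smul_right] at hone
  field_simp at hone
  exact hone

end IsSeparating

namespace IsSimplexConfiguration

theorem isSeparating [Nonempty κ] (h : IsSimplexConfiguration W H) : IsSeparating W H := by
  intro k i j hjk
  rw [h.feature_eq, real_inner_smul_right, h.isSimplexETF.inner_sub_self hjk,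
    inv_mul_cancel₀ (by positivity)]

theorem sum_norm_sq_eq [Nonempty κ] (h : IsSimplexConfiguration W H) :
    ∑ k, ‖W k‖ ^ 2 = ∑ k, ∑ i, ‖H k i‖ ^ 2 := by
  simp only [h.feature_eq, norm_smul, mul_pow, norm_inv, inv_pow, Real.norm_eq_abs, sq_abs,
    Real.sq_sqrt (Nat.cast_nonneg _), sum_const, card_univ, nsmul_eq_mul]
  field_simp

theorem separationObjective_eq [Nonempty ι] [Nonempty κ] (h : IsSimplexConfiguration W H) :
    separationObjective W H = 2 * (Fintype.card ι - 1) * √(Fintype.card κ) := by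
  rw [separationObjective, ← h.sum_norm_sq_eq]
  simp only [h.isSimplexETF.norm_sq, sum_const, card_univ, nsmul_eq_mul]
  field_simp
  ring

theorem neuralCollapse {K n d : ℕ} {W : Fin K → EuclideanSpace ℝ (Fin d)}
    {H : Fin K → Fin n → EuclideanSpace ℝ (Fin d)} (hK : 2 ≤ K) (hn : 1 ≤ n)
    (h : IsSimplexConfiguration W H) : NeuralCollapse W H := by
  have : Nontrivial (Fin K) := Fin.nontrivial_iff_two_le.2 hK
  obtain ⟨hW, hH⟩ := h
  have hr : 0 < √(Fintype.card (Fin n) : ℝ) := by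
    rw [Fintype.card_fin]
    exact Real.sqrt_pos.2 (by exact_mod_cast hn)
  set r := √(Fintype.card (Fin n) : ℝ)
  obtain rfl : H = fun k _ => (r⁻¹ • W) k := by
    funext k i
    exact hH k i
  have hU : IsSimplexETF (r⁻¹ ^ 2 * r) (r⁻¹ • W) := hW.smul r⁻¹
  refine ⟨fun _ _ _ => rfl, hW.sum_eq_zero, hW.norm_eq, fun k k' _ _ => hU.norm_eq k k',
    fun k _ => hU.ne_zero (by positivity) k, fun k j hkj _ _ => ?_, r, hr, fun k _ => ?_⟩
  · simpa only [Fintype.card_fin] using hU.inner_eq_neg_norm_mul_norm_div hkj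
  · exact (smul_inv_smul₀ hr.ne' (W k)).symm

end IsSimplexConfiguration

theorem exists_isSimplexConfiguration [Nonempty ι]
    (hE : (Fintype.card ι : Cardinal) ≤ Module.rank ℝ E + 1) :
    ∃ (W : ι → E) (H : ι → κ → E), IsSimplexConfiguration W H :=
  let ⟨W, hW⟩ := exists_isSimplexETF (Real.sqrt_nonneg _) hE
  ⟨W, fun k _ => (√(Fintype.card κ))⁻¹ • W k, hW, fun _ _ => rfl⟩

theorem minimum_norm_separation_global_optimum_general [Nonempty ι] [Nonempty κ]
    (hE : (Fintype.card ι : Cardinal) ≤ Module.rank ℝ E + 1) :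
    (∀ (W : ι → E) (H : ι → κ → E), IsSeparating W H →
      2 * (Fintype.card ι - 1) * √(Fintype.card κ) ≤ separationObjective W H) ∧
    (∃ (W : ι → E) (H : ι → κ → E), IsSeparating W H ∧
      separationObjective W H = 2 * (Fintype.card ι - 1) * √(Fintype.card κ)) ∧
    ∀ (W : ι → E) (H : ι → κ → E),
      (IsSeparating W H ∧ ∀ (W' : ι → E) (H' : ι → κ → E), IsSeparating W' H' →
        separationObjective W H ≤ separationObjective W' H') ↔ IsSimplexConfiguration W H := by
  obtain ⟨W₀, H₀, h₀⟩ := exists_isSimplexConfiguration (κ := κ) hE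
  refine ⟨fun W H h => h.le_separationObjective,
    ⟨W₀, H₀, h₀.isSeparating, h₀.separationObjective_eq⟩, fun W H => ⟨?_, fun h => ?_⟩⟩
  · rintro ⟨h, hmin⟩
    exact h.isSimplexConfiguration
      ((hmin W₀ H₀ h₀.isSeparating).trans_eq h₀.separationObjective_eq)
  · exact ⟨h.isSeparating, fun W' H' h' =>
      h.separationObjective_eq.trans_le h'.le_separationObjective⟩

end Separation

theorem minimum_norm_separation_global_optimum {K n d : ℕ}
    (hK : 2 ≤ K) (hn : 1 ≤ n) (hd : K - 1 ≤ d) :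
    (∀ (W : Fin K → EuclideanSpace ℝ (Fin d)) (H : Fin K → Fin n → EuclideanSpace ℝ (Fin d)),
        Feasible W H → 2 * ((K : ℝ) - 1) * Real.sqrt n ≤ WF2 W + HF2 H) ∧
    (∃ (W : Fin K → EuclideanSpace ℝ (Fin d)) (H : Fin K → Fin n → EuclideanSpace ℝ (Fin d)),
        Feasible W H ∧ WF2 W + HF2 H = 2 * ((K : ℝ) - 1) * Real.sqrt n) ∧
    (∀ (W : Fin K → EuclideanSpace ℝ (Fin d)) (H : Fin K → Fin n → EuclideanSpace ℝ (Fin d)),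
        Feasible W H →
        (∀ (W' : Fin K → EuclideanSpace ℝ (Fin d)) (H' : Fin K → Fin n → EuclideanSpace ℝ (Fin d)),
            Feasible W' H' → WF2 W + HF2 H ≤ WF2 W' + HF2 H') →
        NeuralCollapse W H ∧ Real.sqrt (WF2 W) = Real.sqrt (HF2 H)) := by
  have : Nonempty (Fin K) := Fin.pos_iff_nonempty.1 (by omega)
  have : Nonempty (Fin n) := Fin.pos_iff_nonempty.1 hn
  have hE : (Fintype.card (Fin K) : Cardinal) ≤ Module.rank ℝ (EuclideanSpace ℝ (Fin d)) + 1 := by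
    rw [← Module.finrank_eq_rank, finrank_euclideanSpace_fin, Fintype.card_fin]
    exact_mod_cast Nat.sub_le_iff_le_add.1 hd
  obtain ⟨hle, hex, hmin⟩ := minimum_norm_separation_global_optimum_general (κ := Fin n) hE
  simp only [Fintype.card_fin] at hle hex
  refine ⟨hle, hex, fun W H hF hopt => ?_⟩
  have h := (hmin W H).1 ⟨hF, hopt⟩
  exact ⟨h.neuralCollapse hK hn, congrArg Real.sqrt h.sum_norm_sq_eq⟩
end

section
/- If q_min(W,H) ≥ 0, then Σ_{k=1}^K Σ_{i=1}^n Σ_{j≠k} p_{k,i,j}(W,H)·s_{k,i,j}(W,H) ≥ q_min(W,H)·(1 − exp(−L(W,H))). -/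
open scoped BigOperators RealInnerProductSpace
open Finset

noncomputable def qmin {K n d : ℕ} (W : Fin K → EuclideanSpace ℝ (Fin d))
    (H : Fin K → Fin n → EuclideanSpace ℝ (Fin d)) : ℝ :=
  sInf {x : ℝ | ∃ k i j, j ≠ k ∧ x = sWH W H k i j}

noncomputable def LWH {K n d : ℕ} (W : Fin K → EuclideanSpace ℝ (Fin d))
    (H : Fin K → Fin n → EuclideanSpace ℝ (Fin d)) : ℝ :=
  ∑ k, ∑ i, Real.log (1 + ∑ j ∈ univ.filter (fun j => j ≠ k), Real.exp (-(sWH W H k i j)))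


noncomputable def pWH {K n d : ℕ} (W : Fin K → EuclideanSpace ℝ (Fin d))
    (H : Fin K → Fin n → EuclideanSpace ℝ (Fin d)) (k : Fin K) (i : Fin n) (j : Fin K) : ℝ :=
  Real.exp (-(sWH W H k i j)) /
    (1 + ∑ l ∈ univ.filter (fun l => l ≠ k), Real.exp (-(sWH W H k i l)))

/-!
For a single sample with loss `ℓ`, the wrong classes carry total softmax probability exactly
`1 - exp (-ℓ)`, so its probability-weighted margin is at least `q * (1 - exp (-ℓ))` for any lower
bound `q` on its margins. Since `x ↦ 1 - exp (-x)` is subadditive on `[0, ∞)` and losses are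
nonnegative, summing over the samples replaces the individual losses by the total loss.
-/

lemma one_sub_exp_neg_add_le {x y : ℝ} (hx : 0 ≤ x) (hy : 0 ≤ y) :
    1 - Real.exp (-(x + y)) ≤ (1 - Real.exp (-x)) + (1 - Real.exp (-y)) := by
  have hx' : 0 ≤ 1 - Real.exp (-x) := sub_nonneg.mpr (Real.exp_le_one_iff.mpr (neg_nonpos.mpr hx))
  have hy' : 0 ≤ 1 - Real.exp (-y) := sub_nonneg.mpr (Real.exp_le_one_iff.mpr (neg_nonpos.mpr hy))
  have hprod : 0 ≤ (1 - Real.exp (-x)) * (1 - Real.exp (-y)) := mul_nonneg hx' hy'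
  rw [neg_add, Real.exp_add]
  linarith

lemma one_sub_exp_neg_sum_le {ι : Type*} {t : Finset ι} {x : ι → ℝ} (hx : ∀ i ∈ t, 0 ≤ x i) :
    1 - Real.exp (-∑ i ∈ t, x i) ≤ ∑ i ∈ t, (1 - Real.exp (-x i)) :=
  le_sum_of_subadditive_on_pred (fun y ↦ 1 - Real.exp (-y)) (0 ≤ ·) (by simp)
    (fun _ _ ↦ one_sub_exp_neg_add_le) (fun _ _ ↦ add_nonneg) x hx

section SingleSample

variable {κ : Type*} (J : Finset κ) (s : κ → ℝ)

/-- The softmax denominator of a sample whose margins over the wrong classes `j ∈ J` are `s j`,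
divided by the exponential of the score of the true class; that class contributes the summand
`1`. -/
noncomputable def marginPartition : ℝ := 1 + ∑ j ∈ J, Real.exp (-s j)

/-- The cross-entropy loss of a sample, as a function of its margins `s j` over the wrong classes
`j ∈ J`. -/
noncomputable def marginLoss : ℝ := Real.log (marginPartition J s)

/-- The softmax probability of the wrong class `j ∈ J`, as a function of the margins of the
sample. -/
noncomputable def marginProb (j : κ) : ℝ := Real.exp (-s j) / marginPartition J s

lemma one_le_marginPartition : 1 ≤ marginPartition J s :=
  le_add_of_nonneg_right (sum_nonneg fun _ _ ↦ (Real.exp_pos _).le)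

lemma marginPartition_pos : 0 < marginPartition J s :=
  zero_lt_one.trans_le (one_le_marginPartition J s)

lemma marginLoss_nonneg : 0 ≤ marginLoss J s :=
  Real.log_nonneg (one_le_marginPartition J s)

lemma marginProb_nonneg (j : κ) : 0 ≤ marginProb J s j :=
  div_nonneg (Real.exp_pos _).le (marginPartition_pos J s).le

lemma sum_marginProb : ∑ j ∈ J, marginProb J s j = 1 - Real.exp (-marginLoss J s) := by
  have hpos := marginPartition_pos J s
  calc ∑ j ∈ J, marginProb J s j
      = (∑ j ∈ J, Real.exp (-s j)) / marginPartition J s := (sum_div ..).symm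
    _ = (marginPartition J s - 1) / marginPartition J s := by
      rw [marginPartition, add_sub_cancel_left]
    _ = 1 - (marginPartition J s)⁻¹ := by rw [sub_div, div_self hpos.ne', one_div]
    _ = 1 - Real.exp (-marginLoss J s) := by rw [marginLoss, Real.exp_neg, Real.exp_log hpos]

variable {J s} in
lemma mul_one_sub_exp_neg_marginLoss_le {q : ℝ} (hs : ∀ j ∈ J, q ≤ s j) :
    q * (1 - Real.exp (-marginLoss J s)) ≤ ∑ j ∈ J, marginProb J s j * s j := by
  rw [← sum_marginProb, mul_comm, sum_mul]
  exact sum_le_sum fun j hj ↦ mul_le_mul_of_nonneg_left (hs j hj) (marginProb_nonneg J s j)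

end SingleSample

theorem weighted_margin_lower_bound_general {ι κ : Type*} {T : Finset ι} {J : ι → Finset κ}
    {s : ι → κ → ℝ} {q : ℝ} (hq : 0 ≤ q) (hs : ∀ i ∈ T, ∀ j ∈ J i, q ≤ s i j) :
    q * (1 - Real.exp (-∑ i ∈ T, marginLoss (J i) (s i)))
      ≤ ∑ i ∈ T, ∑ j ∈ J i, marginProb (J i) (s i) j * s i j :=
  calc q * (1 - Real.exp (-∑ i ∈ T, marginLoss (J i) (s i)))
      ≤ q * ∑ i ∈ T, (1 - Real.exp (-marginLoss (J i) (s i))) :=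
        mul_le_mul_of_nonneg_left
          (one_sub_exp_neg_sum_le fun i _ ↦ marginLoss_nonneg (J i) (s i)) hq
    _ = ∑ i ∈ T, q * (1 - Real.exp (-marginLoss (J i) (s i))) := mul_sum ..
    _ ≤ ∑ i ∈ T, ∑ j ∈ J i, marginProb (J i) (s i) j * s i j :=
        sum_le_sum fun i hi ↦ mul_one_sub_exp_neg_marginLoss_le (hs i hi)

section Classifier

variable {K n d : ℕ} (W : Fin K → EuclideanSpace ℝ (Fin d))
  (H : Fin K → Fin n → EuclideanSpace ℝ (Fin d))

lemma qmin_le_sWH (k : Fin K) (i : Fin n) {j : Fin K} (hj : j ≠ k) :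
    qmin W H ≤ sWH W H k i j := by
  have hfin : (Set.range fun t : Fin K × Fin n × Fin K ↦ sWH W H t.1 t.2.1 t.2.2).Finite :=
    Set.finite_range _
  refine csInf_le (hfin.bddBelow.mono ?_) ⟨k, i, j, hj, rfl⟩
  rintro _ ⟨k, i, j, -, rfl⟩
  exact ⟨(k, i, j), rfl⟩

lemma LWH_eq_sum_marginLoss :
    LWH W H = ∑ t : Fin K × Fin n,
      marginLoss (univ.filter fun j ↦ j ≠ t.1) (sWH W H t.1 t.2) :=
  (Fintype.sum_prod_type' _).symm

lemma sum_pWH_mul_sWH_eq :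
    ∑ k, ∑ i, ∑ j ∈ univ.filter (fun j ↦ j ≠ k), pWH W H k i j * sWH W H k i j =
      ∑ t : Fin K × Fin n, ∑ j ∈ univ.filter (fun j ↦ j ≠ t.1),
        marginProb (univ.filter fun j ↦ j ≠ t.1) (sWH W H t.1 t.2) j * sWH W H t.1 t.2 j :=
  (Fintype.sum_prod_type' _).symm

end Classifier

theorem weighted_margin_lower_bound {K n d : ℕ} (hK : 2 ≤ K) (hn : 1 ≤ n) (hd : 1 ≤ d)
    (W : Fin K → EuclideanSpace ℝ (Fin d)) (H : Fin K → Fin n → EuclideanSpace ℝ (Fin d))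
    (hq : 0 ≤ qmin W H) :
    qmin W H * (1 - Real.exp (-(LWH W H)))
      ≤ ∑ k, ∑ i, ∑ j ∈ univ.filter (fun j => j ≠ k), pWH W H k i j * sWH W H k i j := by
  rw [LWH_eq_sum_marginLoss, sum_pWH_mul_sWH_eq]
  exact weighted_margin_lower_bound_general hq fun t _ _ hj ↦
    qmin_le_sWH W H t.1 t.2 (mem_filter.mp hj).2
end
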